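/- Let F be the free group on generators x₁, y₁, x₂, y₂, let H be the 4-dimensional ℚ-vector space with basis X₁,Y₁,X₂,Y₂ equipped with the alternating bilinear form ⟨·,·⟩ with ⟨Xᵢ,Yⱼ⟩ = δᵢⱼ and ⟨Xᵢ,Xⱼ⟩ = ⟨Yᵢ,Yⱼ⟩ = 0, let φ : F → H be the homomorphism with φ(xᵢ) = Xᵢ and φ(yᵢ) = Yᵢ, and let ℓ : F → ∧²H be a half-intersection cocycle for φ with ℓ(xᵢ) = (1/2)·Xᵢ∧Yᵢ and ℓ(yᵢ) = −(1/2)·Xᵢ∧Yᵢ for i = 1, 2. Set ζ = [x₁,y₁][x₂,y₂], a = x₁, and b = x₂⁻¹·[y₁,ζ]·ζ. Then ℓ(ζ) = X₁∧Y₁ + X₂∧Y₂, φ(b) = −X₂, and ℓ(a)(φ(b)) + ℓ(b)(φ(a)) = −φ(a); in particular this value lies in ℤ·φ(a) + ℤ·φ(b). -/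

import Mathlib

open scoped TensorProduct

/-- The wedge `x ∧ y` as an element of the exterior square `⋀[ℚ]^2 H`. -/
noncomputable def wedge {H : Type*} [AddCommGroup H] [Module ℚ H] (x y : H) : ⋀[ℚ]^2 H :=
  ⟨ExteriorAlgebra.ι ℚ x * ExteriorAlgebra.ι ℚ y, by
    rw [ExteriorAlgebra.exteriorPower, pow_two]
    exact Submodule.mul_mem_mul (LinearMap.mem_range_self _ x) (LinearMap.mem_range_self _ y)⟩

/-- `ℓ : π → ⋀²H` is a half-intersection cocycle for `φ` if `ℓ(1) = 0` and
`ℓ(gh) = ℓ(g) + ℓ(h) + (1/2)·φ(g)∧φ(h)`. -/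
def IsHalfCocycle {π H : Type*} [Group π] [AddCommGroup H] [Module ℚ H]
    (φ : π → H) (ℓ : π → ⋀[ℚ]^2 H) : Prop :=
  ℓ 1 = 0 ∧ ∀ g h : π, ℓ (g * h) = ℓ g + ℓ h + (1/2 : ℚ) • wedge (φ g) (φ h)

/-- The standard basis vector `Xᵢ`/`Yᵢ` of the homology of the genus-2 surface:
`e 0 = X₁`, `e 1 = Y₁`, `e 2 = X₂`, `e 3 = Y₂`. -/
def e (i : Fin 4) : Fin 4 → ℚ := Pi.single i 1

/-!
A half-intersection cocycle sends a commutator `⁅g, h⁆` to `φ g ∧ φ h`: apply the cocycle rule to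
`⁅g, h⁆ * (h * g) = g * h`, using `φ ⁅g, h⁆ = 0` and antisymmetry of the wedge. Moreover `ℓ` is
additive on a product as soon as one factor lies in the kernel of `φ`, and `ℓ g⁻¹ = -ℓ g`.
Hence `ℓ ζ = X₁ ∧ Y₁ + X₂ ∧ Y₂`, and, as `φ ζ = 0`, `ℓ ⁅y₁, ζ⁆ = 0`, so
`ℓ b = ℓ ζ - ℓ x₂ = X₁ ∧ Y₁ + (1/2) X₂ ∧ Y₂`. Contracting `X₁` with this gives `-X₁`, while
`ℓ a = (1/2) X₁ ∧ Y₁` kills `φ b = -X₂`.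
-/

open scoped commutatorElement

section Wedge

variable {H : Type*} [AddCommGroup H] [Module ℚ H]

lemma wedge_zero_left (y : H) : wedge 0 y = 0 :=
  Subtype.ext <| by simp [wedge]

lemma wedge_zero_right (x : H) : wedge x 0 = 0 :=
  Subtype.ext <| by simp [wedge]

lemma wedge_neg_right (x y : H) : wedge x (-y) = -wedge x y :=
  Subtype.ext <| by simp [wedge]

lemma wedge_self (x : H) : wedge x x = 0 :=
  Subtype.ext <| by simp [wedge]

lemma wedge_swap (x y : H) : wedge y x = -wedge x y :=
  Subtype.ext <| eq_neg_of_add_eq_zero_right <| ExteriorAlgebra.ι_add_mul_swap x y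

end Wedge

section Additive

variable {π H : Type*} [Group π] [AddCommGroup H] {φ : π → H}

lemma map_inv_eq_neg (hφ : ∀ g h, φ (g * h) = φ g + φ h) (g : π) : φ g⁻¹ = -φ g :=
  map_inv (MonoidHom.mk' (Multiplicative.ofAdd ∘ φ) hφ) g

lemma map_commutatorElement_eq_zero (hφ : ∀ g h, φ (g * h) = φ g + φ h) (g h : π) :
    φ ⁅g, h⁆ = 0 := by
  simp only [commutatorElement_def, hφ, map_inv_eq_neg hφ]
  abel

end Additive

namespace IsHalfCocycle

variable {π H : Type*} [Group π] [AddCommGroup H] [Module ℚ H] {φ : π → H} {ℓ : π → ⋀[ℚ]^2 H}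

lemma map_inv (hℓ : IsHalfCocycle φ ℓ) (hφ : ∀ g h, φ (g * h) = φ g + φ h) (g : π) :
    ℓ g⁻¹ = -ℓ g := by
  refine eq_neg_of_add_eq_zero_right ?_
  calc ℓ g + ℓ g⁻¹ = ℓ (g * g⁻¹) := by
        rw [hℓ.2, map_inv_eq_neg hφ, wedge_neg_right, wedge_self, neg_zero, smul_zero, add_zero]
    _ = 0 := by rw [mul_inv_cancel, hℓ.1]

lemma map_mul_of_left_eq_zero (hℓ : IsHalfCocycle φ ℓ) {g : π} (hg : φ g = 0) (h : π) :
    ℓ (g * h) = ℓ g + ℓ h := by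
  rw [hℓ.2, hg, wedge_zero_left, smul_zero, add_zero]

lemma map_mul_of_right_eq_zero (hℓ : IsHalfCocycle φ ℓ) (g : π) {h : π} (hh : φ h = 0) :
    ℓ (g * h) = ℓ g + ℓ h := by
  rw [hℓ.2, hh, wedge_zero_right, smul_zero, add_zero]

lemma map_commutatorElement (hℓ : IsHalfCocycle φ ℓ) (hφ : ∀ g h, φ (g * h) = φ g + φ h)
    (g h : π) : ℓ ⁅g, h⁆ = wedge (φ g) (φ h) := by
  have hgh : ℓ (g * h) = ℓ ⁅g, h⁆ + ℓ (h * g) := by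
    rw [← hℓ.map_mul_of_left_eq_zero (map_commutatorElement_eq_zero hφ g h),
      commutatorElement_def]
    group
  rw [hℓ.2 g h, hℓ.2 h g, wedge_swap (φ g) (φ h)] at hgh
  linear_combination (norm := module) -hgh

lemma map_commutatorElement_mul_commutatorElement (hℓ : IsHalfCocycle φ ℓ)
    (hφ : ∀ g h, φ (g * h) = φ g + φ h) (g₁ h₁ g₂ h₂ : π) :
    ℓ (⁅g₁, h₁⁆ * ⁅g₂, h₂⁆) = wedge (φ g₁) (φ h₁) + wedge (φ g₂) (φ h₂) := by
  rw [hℓ.map_mul_of_left_eq_zero (map_commutatorElement_eq_zero hφ g₁ h₁),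
    hℓ.map_commutatorElement hφ, hℓ.map_commutatorElement hφ]

lemma map_inv_mul_commutatorElement_mul (hℓ : IsHalfCocycle φ ℓ)
    (hφ : ∀ g h, φ (g * h) = φ g + φ h) (g h : π) {z : π} (hz : φ z = 0) :
    ℓ (g⁻¹ * ⁅h, z⁆ * z) = ℓ z - ℓ g := by
  rw [hℓ.map_mul_of_right_eq_zero _ hz,
    hℓ.map_mul_of_right_eq_zero _ (map_commutatorElement_eq_zero hφ h z),
    hℓ.map_commutatorElement hφ, hz, wedge_zero_right, hℓ.map_inv hφ]
  abel

end IsHalfCocycle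

theorem converse_fails_example_general {π H : Type*} [Group π] [AddCommGroup H] [Module ℚ H]
    (ω : H →ₗ[ℚ] H →ₗ[ℚ] ℚ) (hω : ω.IsAlt)
    (act : ⋀[ℚ]^2 H →ₗ[ℚ] H →ₗ[ℚ] H)
    (hact : ∀ X Y Z : H, act (wedge X Y) Z = ω Z X • Y - ω Z Y • X)
    (φ : π → H) (hφ : ∀ g h : π, φ (g * h) = φ g + φ h)
    (ℓ : π → ⋀[ℚ]^2 H) (hℓ : IsHalfCocycle φ ℓ)
    (x₁ y₁ x₂ y₂ : π)
    (hx₁y₁ : ω (φ x₁) (φ y₁) = 1) (hx₁x₂ : ω (φ x₁) (φ x₂) = 0)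
    (hx₁y₂ : ω (φ x₁) (φ y₂) = 0) (hx₂y₁ : ω (φ x₂) (φ y₁) = 0)
    (hℓx₁ : ℓ x₁ = (1/2 : ℚ) • wedge (φ x₁) (φ y₁))
    (hℓx₂ : ℓ x₂ = (1/2 : ℚ) • wedge (φ x₂) (φ y₂))
    (ζ b : π) (hζ : ζ = ⁅x₁, y₁⁆ * ⁅x₂, y₂⁆) (hb : b = x₂⁻¹ * ⁅y₁, ζ⁆ * ζ) :
    ℓ ζ = wedge (φ x₁) (φ y₁) + wedge (φ x₂) (φ y₂) ∧
    φ b = -φ x₂ ∧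
    act (ℓ x₁) (φ b) + act (ℓ b) (φ x₁) = -φ x₁ ∧
    ∃ m n : ℤ, act (ℓ x₁) (φ b) + act (ℓ b) (φ x₁) = m • φ x₁ + n • φ b := by
  have hφζ : φ ζ = 0 := by
    simp only [hζ, hφ, map_commutatorElement_eq_zero hφ, add_zero]
  have hℓζ : ℓ ζ = wedge (φ x₁) (φ y₁) + wedge (φ x₂) (φ y₂) :=
    hζ ▸ hℓ.map_commutatorElement_mul_commutatorElement hφ x₁ y₁ x₂ y₂
  have hφb : φ b = -φ x₂ := by
    simp only [hb, hφ, map_commutatorElement_eq_zero hφ, hφζ, map_inv_eq_neg hφ, add_zero]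
  have hℓb : ℓ b = wedge (φ x₁) (φ y₁) + (1/2 : ℚ) • wedge (φ x₂) (φ y₂) := by
    rw [hb, hℓ.map_inv_mul_commutatorElement_mul hφ _ _ hφζ, hℓζ, hℓx₂]
    module
  have hab : act (ℓ x₁) (φ b) = 0 := by
    have hx₂x₁ : ω (φ x₂) (φ x₁) = 0 := by rw [← hω.neg, hx₁x₂, neg_zero]
    simp [hφb, hℓx₁, hact, hx₂x₁, hx₂y₁]
  have hba : act (ℓ b) (φ x₁) = -φ x₁ := by
    simp [hℓb, hact, hω.self_eq_zero, hx₁y₁, hx₁x₂, hx₁y₂]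
  have hsum : act (ℓ x₁) (φ b) + act (ℓ b) (φ x₁) = -φ x₁ := by rw [hab, hba, zero_add]
  exact ⟨hℓζ, hφb, hsum, -1, 0, by simp [hsum]⟩

theorem converse_fails_example
    (ω : (Fin 4 → ℚ) →ₗ[ℚ] (Fin 4 → ℚ) →ₗ[ℚ] ℚ)
    (hω : ∀ u v : Fin 4 → ℚ, ω u v = u 0 * v 1 - u 1 * v 0 + u 2 * v 3 - u 3 * v 2)
    (act : ⋀[ℚ]^2 (Fin 4 → ℚ) →ₗ[ℚ] (Fin 4 → ℚ) →ₗ[ℚ] (Fin 4 → ℚ))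
    (hact : ∀ X Y Z : Fin 4 → ℚ, act (wedge X Y) Z = ω Z X • Y - ω Z Y • X)
    (φ : FreeGroup (Fin 4) → (Fin 4 → ℚ))
    (hφ : ∀ g h : FreeGroup (Fin 4), φ (g * h) = φ g + φ h)
    (hφ₀ : ∀ i : Fin 4, φ (FreeGroup.of i) = e i)
    (ℓ : FreeGroup (Fin 4) → ⋀[ℚ]^2 (Fin 4 → ℚ))
    (hℓ : IsHalfCocycle φ ℓ)
    (hx1 : ℓ (FreeGroup.of 0) = (1/2 : ℚ) • wedge (e 0) (e 1))
    (hy1 : ℓ (FreeGroup.of 1) = -((1/2 : ℚ) • wedge (e 0) (e 1)))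
    (hx2 : ℓ (FreeGroup.of 2) = (1/2 : ℚ) • wedge (e 2) (e 3))
    (hy2 : ℓ (FreeGroup.of 3) = -((1/2 : ℚ) • wedge (e 2) (e 3)))
    (ζ a b : FreeGroup (Fin 4))
    (hζ : ζ = (FreeGroup.of 0 * FreeGroup.of 1 * (FreeGroup.of 0)⁻¹ * (FreeGroup.of 1)⁻¹)
      * (FreeGroup.of 2 * FreeGroup.of 3 * (FreeGroup.of 2)⁻¹ * (FreeGroup.of 3)⁻¹))
    (ha : a = FreeGroup.of 0)
    (hb : b = (FreeGroup.of 2)⁻¹ * (FreeGroup.of 1 * ζ * (FreeGroup.of 1)⁻¹ * ζ⁻¹) * ζ) :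
    ℓ ζ = wedge (e 0) (e 1) + wedge (e 2) (e 3) ∧
    φ b = -(e 2) ∧
    act (ℓ a) (φ b) + act (ℓ b) (φ a) = -(φ a) ∧
    ∃ m n : ℤ, act (ℓ a) (φ b) + act (ℓ b) (φ a) = m • φ a + n • φ b := by
  subst ha
  simpa only [hφ₀] using converse_fails_example_general ω (fun v ↦ by rw [hω]; ring) act hact φ hφ
    ℓ hℓ (.of 0) (.of 1) (.of 2) (.of 3) (by simp [hω, hφ₀, e]) (by simp [hω, hφ₀, e])
    (by simp [hω, hφ₀, e]) (by simp [hω, hφ₀, e]) (by simpa only [hφ₀]) (by simpa only [hφ₀])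
    ζ b hζ hb
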